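/- For all positive integers n_u, n_y, n_p, if n_a = n_b and n_d = n_c ≥ 1, then the LPV-ARX parameter count n_y·(n_u·∑_{i=0}^{n_a}(1+n_p)^{2i+1} + n_y·∑_{j=1}^{n_d}(1+n_p)^{2j}) is greater than or equal to the LPV-MAX parameter count n_y·(n_u·∑_{i=1}^{n_b+1}(1+n_p)^i + n_y·∑_{j=2}^{n_c+1}(1+n_p)^j), with strict inequality whenever n_p ≥ 1 and n_a ≥ 1. -/

import Mathlib

open Finset

/-- For positive `n_u, n_y` and orders `n_a = n_b ≥ 0`, `n_d = n_c ≥ 1`, the LPV-ARX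
parameter count is at least the LPV-MAX parameter count, with strict inequality
whenever `n_p ≥ 1` and `n_a ≥ 1`. -/
theorem lpv_arx_ge_lpv_max (nu ny np na nc : ℕ)
    (hnu : 1 ≤ nu) (hny : 1 ≤ ny) (hnc : 1 ≤ nc) :
    (ny * (nu * ∑ i ∈ Icc 1 (na + 1), (1 + np) ^ i +
        ny * ∑ j ∈ Icc 2 (nc + 1), (1 + np) ^ j) ≤
      ny * (nu * ∑ i ∈ range (na + 1), (1 + np) ^ (2 * i + 1) +
        ny * ∑ j ∈ Icc 1 nc, (1 + np) ^ (2 * j))) ∧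
    (1 ≤ np → 1 ≤ na →
      ny * (nu * ∑ i ∈ Icc 1 (na + 1), (1 + np) ^ i +
          ny * ∑ j ∈ Icc 2 (nc + 1), (1 + np) ^ j) <
        ny * (nu * ∑ i ∈ range (na + 1), (1 + np) ^ (2 * i + 1) +
          ny * ∑ j ∈ Icc 1 nc, (1 + np) ^ (2 * j))) := by
  have hpos : 1 ≤ 1 + np := by omega
  have e1 : ∑ i ∈ Icc 1 (na + 1), (1 + np) ^ i = ∑ i ∈ range (na + 1), (1 + np) ^ (i + 1) := by
    refine (Finset.sum_bij (fun i _ => i + 1) ?_ ?_ ?_ ?_).symm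
    · intro i hi; simp only [mem_range, mem_Icc] at *; omega
    · intro i _ j _ h; simpa using h
    · intro b hb
      simp only [mem_Icc] at hb
      exact ⟨b - 1, by simp only [mem_range]; omega, by omega⟩
    · intro i _; rfl
  have e2 : ∑ j ∈ Icc 2 (nc + 1), (1 + np) ^ j = ∑ j ∈ Icc 1 nc, (1 + np) ^ (j + 1) := by
    refine (Finset.sum_bij (fun i _ => i + 1) ?_ ?_ ?_ ?_).symm
    · intro i hi; simp only [mem_Icc] at *; omega
    · intro i _ j _ h; simpa using h
    · intro b hb
      simp only [mem_Icc] at hb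
      exact ⟨b - 1, by simp only [mem_Icc]; omega, by omega⟩
    · intro i _; rfl
  have h2 : ∑ j ∈ Icc 2 (nc + 1), (1 + np) ^ j ≤ ∑ j ∈ Icc 1 nc, (1 + np) ^ (2 * j) := by
    rw [e2]
    refine Finset.sum_le_sum fun j hj => Nat.pow_le_pow_right hpos ?_
    simp only [mem_Icc] at hj; omega
  have h1 : ∀ i ∈ range (na + 1), (1 + np) ^ (i + 1) ≤ (1 + np) ^ (2 * i + 1) :=
    fun i _ => Nat.pow_le_pow_right hpos (by omega)
  constructor
  · rw [e1]
    exact Nat.mul_le_mul_left _ (Nat.add_le_add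
      (Nat.mul_le_mul_left _ (Finset.sum_le_sum h1)) (Nat.mul_le_mul_left _ h2))
  · intro hnp hna
    rw [e1]
    have h3 : ∑ i ∈ range (na + 1), (1 + np) ^ (i + 1)
        < ∑ i ∈ range (na + 1), (1 + np) ^ (2 * i + 1) :=
      Finset.sum_lt_sum h1 ⟨1, by simp only [mem_range]; omega,
        Nat.pow_lt_pow_right (by omega) (by omega)⟩
    exact Nat.mul_lt_mul_of_pos_left (Nat.add_lt_add_of_lt_of_le
      (Nat.mul_lt_mul_of_pos_left h3 hnu) (Nat.mul_le_mul_left _ h2)) hny
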